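/- Let ℓ be a prime number and let V and V' be two-dimensional vector spaces over the finite field F_ℓ. Let Δ be a subgroup of GL(V) × GL(V'), and let G ≤ GL(V) and G' ≤ GL(V') be the images of Δ under the two projection homomorphisms. Assume that one of the groups G, G' is Hasse and that the other is not contained in a Borel subgroup (i.e., no line of its space is invariant under all of its elements). Then Δ, acting block-diagonally on V × V', is Hasse: every element (g, g') ∈ Δ has an eigenvector in V × V', and no line of V × V' is invariant under all elements of Δ. -/

import Mathlib

/-- A subgroup `G` of `GL(V)` is *Hasse* if every element of `G` has an eigenvector in `V`
(equivalently, its image in `PGL(V)` fixes a point of `P(V)`), but no line of `V` is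
invariant under all of `G`. -/
def IsHasseSubgroup {k V : Type*} [Field k] [AddCommGroup V] [Module k V]
    (G : Subgroup (LinearMap.GeneralLinearGroup k V)) : Prop :=
  (∀ g ∈ G, ∃ v : V, v ≠ 0 ∧ ∃ c : k, g.val v = c • v) ∧
    ¬∃ v : V, v ≠ 0 ∧ ∀ g ∈ G,
      Submodule.map g.val (Submodule.span k {v}) = Submodule.span k {v}

/-- A subgroup `G` of `GL(V)` is contained in a Borel subgroup iff some line of `V` is
invariant under all of `G`. -/
def ContainedInBorel {k V : Type*} [Field k] [AddCommGroup V] [Module k V]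
    (G : Subgroup (LinearMap.GeneralLinearGroup k V)) : Prop :=
  ∃ v : V, v ≠ 0 ∧ ∀ g ∈ G,
    Submodule.map g.val (Submodule.span k {v}) = Submodule.span k {v}

/-! The inclusions of `V` and `V'` into `V × V'` and the projections back intertwine the
block-diagonal action with the actions of the two blocks. An inclusion carries an eigenvector of a
block to an eigenvector of the pair; a projection carries an invariant line either to zero or to
an invariant line, and the latter is excluded in both factors. -/

section Intertwining

variable {R V W : Type*} [Semiring R] [AddCommMonoid V] [Module R V] [AddCommMonoid W] [Module R W]
  {f : Module.End R V} {g : Module.End R W} {φ : V →ₗ[R] W}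

theorem exists_eigenvector_of_injective_of_comp_eq (hφ : Function.Injective φ)
    (hcomm : φ ∘ₗ f = g ∘ₗ φ) (hf : ∃ v : V, v ≠ 0 ∧ ∃ c : R, f v = c • v) :
    ∃ w : W, w ≠ 0 ∧ ∃ c : R, g w = c • w := by
  obtain ⟨v, hv, c, hvc⟩ := hf
  refine ⟨φ v, (map_ne_zero_iff φ hφ).mpr hv, c, ?_⟩
  calc g (φ v) = φ (f v) := (LinearMap.congr_fun hcomm v).symm
    _ = c • φ v := by rw [hvc, map_smul]

theorem map_span_singleton_apply_eq_of_comp_eq (hcomm : φ ∘ₗ f = g ∘ₗ φ) {v : V}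
    (hv : Submodule.map f (Submodule.span R {v}) = Submodule.span R {v}) :
    Submodule.map g (Submodule.span R {φ v}) = Submodule.span R {φ v} := by
  have hspan : Submodule.map φ (Submodule.span R {v}) = Submodule.span R {φ v} := by
    rw [Submodule.map_span, Set.image_singleton]
  rw [← hspan, ← Submodule.map_comp, ← hcomm, Submodule.map_comp, hv]

end Intertwining

theorem containedInBorel_map_of_comp_eq {k V W H : Type*} [Field k] [AddCommGroup V] [Module k V]
    [AddCommMonoid W] [Module k W] [Group H] {Δ : Subgroup H}
    {ρ : H →* LinearMap.GeneralLinearGroup k V} {σ : H → Module.End k W} {π : W →ₗ[k] V}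
    (hcomm : ∀ p ∈ Δ, π ∘ₗ σ p = (ρ p).val ∘ₗ π) {w : W} (hπw : π w ≠ 0)
    (hw : ∀ p ∈ Δ, Submodule.map (σ p) (Submodule.span k {w}) = Submodule.span k {w}) :
    ContainedInBorel (Δ.map ρ) := by
  refine ⟨π w, hπw, ?_⟩
  rintro _ ⟨p, hp, rfl⟩
  exact map_span_singleton_apply_eq_of_comp_eq (hcomm p hp) (hw p hp)

theorem IsHasseSubgroup.not_containedInBorel {k V : Type*} [Field k] [AddCommGroup V] [Module k V]
    {G : Subgroup (LinearMap.GeneralLinearGroup k V)} (hG : IsHasseSubgroup G) :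
    ¬ContainedInBorel G :=
  hG.2

theorem exists_eigenvector_prodMap {R V V' : Type*} [Semiring R] [AddCommMonoid V] [Module R V]
    [AddCommMonoid V'] [Module R V'] {f : Module.End R V} {f' : Module.End R V'}
    (h : (∃ v : V, v ≠ 0 ∧ ∃ c : R, f v = c • v) ∨ ∃ v : V', v ≠ 0 ∧ ∃ c : R, f' v = c • v) :
    ∃ w : V × V', w ≠ 0 ∧ ∃ c : R, LinearMap.prodMap f f' w = c • w := by
  rcases h with hf | hf'
  · have hinl : LinearMap.inl R V V' ∘ₗ f = LinearMap.prodMap f f' ∘ₗ LinearMap.inl R V V' := by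
      ext <;> simp
    exact exists_eigenvector_of_injective_of_comp_eq LinearMap.inl_injective hinl hf
  · have hinr : LinearMap.inr R V V' ∘ₗ f' = LinearMap.prodMap f f' ∘ₗ LinearMap.inr R V V' := by
      ext <;> simp
    exact exists_eigenvector_of_injective_of_comp_eq LinearMap.inr_injective hinr hf'

theorem not_exists_invariant_line_prodMap {k V V' : Type*} [Field k] [AddCommGroup V] [Module k V]
    [AddCommGroup V'] [Module k V']
    {Δ : Subgroup (LinearMap.GeneralLinearGroup k V × LinearMap.GeneralLinearGroup k V')}
    (hfst : ¬ContainedInBorel (Δ.map (MonoidHom.fst _ _)))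
    (hsnd : ¬ContainedInBorel (Δ.map (MonoidHom.snd _ _))) :
    ¬∃ w : V × V', w ≠ 0 ∧ ∀ p ∈ Δ,
      Submodule.map (LinearMap.prodMap p.1.val p.2.val) (Submodule.span k {w}) =
        Submodule.span k {w} := by
  rintro ⟨w, hw_ne, hw⟩
  have hw_fst : w.1 = 0 := by
    by_contra hne
    exact hfst (containedInBorel_map_of_comp_eq (π := LinearMap.fst k V V')
      (fun _ _ => LinearMap.fst_prod _ _) hne hw)
  have hw_snd : w.2 = 0 := by
    by_contra hne
    exact hsnd (containedInBorel_map_of_comp_eq (π := LinearMap.snd k V V')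
      (fun _ _ => LinearMap.snd_prod _ _) hne hw)
  exact hw_ne (Prod.ext hw_fst hw_snd)

theorem stmt0_general (k V V' : Type*) [Field k]
    [AddCommGroup V] [Module k V] [AddCommGroup V'] [Module k V']
    (Δ : Subgroup (LinearMap.GeneralLinearGroup k V × LinearMap.GeneralLinearGroup k V'))
    (G : Subgroup (LinearMap.GeneralLinearGroup k V))
    (G' : Subgroup (LinearMap.GeneralLinearGroup k V'))
    (hG : G = Subgroup.map (MonoidHom.fst _ _) Δ)
    (hG' : G' = Subgroup.map (MonoidHom.snd _ _) Δ)
    (h : (IsHasseSubgroup G ∧ ¬ContainedInBorel G') ∨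
         (IsHasseSubgroup G' ∧ ¬ContainedInBorel G)) :
    (∀ p ∈ Δ, ∃ w : V × V', w ≠ 0 ∧ ∃ c : k,
        LinearMap.prodMap p.1.val p.2.val w = c • w) ∧
      ¬∃ w : V × V', w ≠ 0 ∧ ∀ p ∈ Δ,
        Submodule.map (LinearMap.prodMap p.1.val p.2.val)
            (Submodule.span k {w}) = Submodule.span k {w} := by
  subst hG hG'
  constructor
  · intro p hp
    exact exists_eigenvector_prodMap <| h.imp
      (fun hHasse => hHasse.1.1 p.1 (Subgroup.mem_map_of_mem _ hp))
      (fun hHasse => hHasse.1.1 p.2 (Subgroup.mem_map_of_mem _ hp))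
  · rcases h with ⟨hHasse, hBorel'⟩ | ⟨hHasse', hBorel⟩
    · exact not_exists_invariant_line_prodMap hHasse.not_containedInBorel hBorel'
    · exact not_exists_invariant_line_prodMap hBorel hHasse'.not_containedInBorel

/-- If `Δ ≤ GL(V) × GL(V')` has projections `G`, `G'`, one of which is Hasse while the other
is not contained in a Borel subgroup, then `Δ`, acting block-diagonally on `V × V'`, is Hasse:
every element of `Δ` has an eigenvector in `V × V'`, and no line of `V × V'` is invariant
under all of `Δ`. -/
theorem stmt0 (ℓ : ℕ) [Fact ℓ.Prime] (V V' : Type*)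
    [AddCommGroup V] [Module (ZMod ℓ) V] [AddCommGroup V'] [Module (ZMod ℓ) V']
    (hV : Module.finrank (ZMod ℓ) V = 2) (hV' : Module.finrank (ZMod ℓ) V' = 2)
    (Δ : Subgroup
      (LinearMap.GeneralLinearGroup (ZMod ℓ) V × LinearMap.GeneralLinearGroup (ZMod ℓ) V'))
    (G : Subgroup (LinearMap.GeneralLinearGroup (ZMod ℓ) V))
    (G' : Subgroup (LinearMap.GeneralLinearGroup (ZMod ℓ) V'))
    (hG : G = Subgroup.map (MonoidHom.fst _ _) Δ)
    (hG' : G' = Subgroup.map (MonoidHom.snd _ _) Δ)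
    (h : (IsHasseSubgroup G ∧ ¬ContainedInBorel G') ∨
         (IsHasseSubgroup G' ∧ ¬ContainedInBorel G)) :
    (∀ p ∈ Δ, ∃ w : V × V', w ≠ 0 ∧ ∃ c : ZMod ℓ,
        LinearMap.prodMap p.1.val p.2.val w = c • w) ∧
      ¬∃ w : V × V', w ≠ 0 ∧ ∀ p ∈ Δ,
        Submodule.map (LinearMap.prodMap p.1.val p.2.val)
            (Submodule.span (ZMod ℓ) {w}) = Submodule.span (ZMod ℓ) {w} :=
  stmt0_general _ V V' Δ G G' hG hG' h
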